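/- For any discrete memoryless channel Q with finite input alphabet 𝒳, finite output alphabet 𝒴, noise symbol ⋆ ∈ 𝒳, and strictly positive synchronized capacity C(Q) > 0, the synchronization threshold equals α(Q) = max_{x∈𝒳} D(Q(·|x) || Q(·|⋆)) (a value in [0,∞]). Moreover, every asynchronism exponent α < α(Q) is achieved by a sequence of codebook/decoder pairs for which lim_{N→∞} (ln M)/N > 0, where M is the number of messages and N the blocklength. -/

import Mathlib

/-!
The rate constraint is void at rate `0`, so only the error probability matters, and a decoder may
observe the whole output before deciding.

Achievability (`code_exists`, `achieve`). Each codeword is a preamble, which repeats a letter `xs`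
with `D(Q(·|xs)‖Q(·|⋆)) > α` over most of the block, followed by an information word drawn at
random. A message is accepted if at some time the preamble score reaches `log A` and the
information score of its word reaches a threshold `θ`. Both scores are sums of finite one-letter
scores obtained from log-likelihood ratios (`exists_score`, `exists_info_score`), and a Chernoff
bound (`chernoff`) shows that the true message is accepted at the true time. For a wrong message,
the information word is independent of the whole output, so that it passes at a given time with
probability at most `exp (-θ)` whatever the alignment with the transmitted codeword; pure noise
passes the preamble test with probability at most `1 / A`, so on average at most `2 N + 1` times
pass it (`sum_preTest_le`). The wrong messages thus contribute at most `M exp (-θ) (2 N + 1)`,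
which vanishes when `M` grows at a small exponential rate.

Converse (`converse_bound`, `not_achievable`). If `α` exceeds every divergence, the law of the
output given a message, averaged over the `A` starting times, is close to the law of pure noise: the
average of the truncated likelihood ratios has mean near `1` and second moment near `1` under pure
noise, since transmissions at distance at least `N` contribute at most `1`, and the at most
`2 N A` remaining pairs contribute at most `exp (N d)` with `d < α`. So the decoder cannot tell
messages apart, and with at least two messages its error probability is bounded away from `0`.
-/

open scoped BigOperators ENNReal

namespace Async

variable {X : Type*} {Y : Type*}

/-- `μ` is a probability distribution on a finite alphabet. -/
def IsDist {A : Type*} [Fintype A] (μ : A → ℝ) : Prop :=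
  (∀ a, 0 ≤ μ a) ∧ ∑ a, μ a = 1

/-- `Q` is a stochastic matrix (discrete memoryless channel). -/
def IsChannel [Fintype X] [Fintype Y] (Q : X → Y → ℝ) : Prop :=
  ∀ x, IsDist (Q x)

open scoped Classical in
/-- Kullback–Leibler divergence `D(μ‖ν)`, valued in `[0,∞]`. -/
noncomputable def klDiv {A : Type*} [Fintype A] (μ ν : A → ℝ) : ℝ≥0∞ :=
  if ∀ a, ν a = 0 → μ a = 0 then
    ENNReal.ofReal (∑ a, μ a * Real.log (μ a / ν a))
  else ⊤

/-- Real-valued Kullback–Leibler divergence (finite regime). -/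
noncomputable def klDivR {A : Type*} [Fintype A] (μ ν : A → ℝ) : ℝ :=
  ∑ a, μ a * Real.log (μ a / ν a)

/-- Left (input) marginal of a joint distribution on `X × Y`. -/
noncomputable def margX [Fintype Y] (V : X × Y → ℝ) : X → ℝ :=
  fun x => ∑ y, V (x, y)

/-- Right (output) marginal of a joint distribution on `X × Y`. -/
noncomputable def margY [Fintype X] (V : X × Y → ℝ) : Y → ℝ :=
  fun y => ∑ x, V (x, y)

/-- Mutual information `I(V)` of a joint distribution `V` on `X × Y`. -/
noncomputable def mi [Fintype X] [Fintype Y] (V : X × Y → ℝ) : ℝ :=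
  ∑ p : X × Y, V p * Real.log (V p / (margX V p.1 * margY V p.2))

/-- The joint distribution `P(x)Q(y|x)` of an input distribution and a channel. -/
noncomputable def joint (P : X → ℝ) (Q : X → Y → ℝ) : X × Y → ℝ :=
  fun p => P p.1 * Q p.1 p.2

/-- Capacity of the synchronized channel: `C(Q) = max_P I(PQ)`. -/
noncomputable def capacity [Fintype X] [Fintype Y] (Q : X → Y → ℝ) : ℝ :=
  sSup {v : ℝ | ∃ P : X → ℝ, IsDist P ∧ v = mi (joint P Q)}

/-- A sequential decoder: a stopping time `τ` (w.r.t. the natural filtration of the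
output sequence, times `1,…,T`) together with an `F_τ`-measurable decision `φ`. -/
structure Decoder (Y : Type*) (T M : ℕ) where
  τ : (Fin T → Y) → ℕ
  φ : (Fin T → Y) → Fin M
  τ_le : ∀ y, τ y ≤ T
  stopping : ∀ y y', (∀ t : Fin T, (t : ℕ) < τ y → y t = y' t) → τ y' = τ y
  meas : ∀ y y', (∀ t : Fin T, (t : ℕ) < τ y → y t = y' t) → φ y' = φ y

/-- Probability of the output sequence `y` (of length `T`, times `1,…,T`) when the
codeword `c` is transmitted starting at time `l`; noise symbol `star` elsewhere. -/
noncomputable def seqProb (Q : X → Y → ℝ) (star : X) {N T : ℕ}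
    (c : Fin N → X) (l : ℕ) (y : Fin T → Y) : ℝ :=
  ∏ t : Fin T,
    Q (if h : l ≤ (t : ℕ) + 1 ∧ (t : ℕ) + 1 < l + N then
        c ⟨(t : ℕ) + 1 - l, by omega⟩ else star) (y t)

/-- Average decoding error probability `P(E)` of a codebook `c` and decoder `dec`
operating at asynchronism level `A`. -/
noncomputable def errProb [Fintype Y] (Q : X → Y → ℝ) (star : X) {N M : ℕ}
    (c : Fin M → Fin N → X) (A : ℕ) (dec : Decoder Y (A + N - 1) M) : ℝ :=
  (1 / ((A : ℝ) * M)) * ∑ m : Fin M, ∑ l ∈ Finset.Icc 1 A,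
    ∑ y : Fin (A + N - 1) → Y, if dec.φ y = m then 0 else seqProb Q star (c m) l y

/-- Expected delay `E(τ-ν)⁺`. -/
noncomputable def expDelay [Fintype Y] (Q : X → Y → ℝ) (star : X) {N M : ℕ}
    (c : Fin M → Fin N → X) (A : ℕ) (dec : Decoder Y (A + N - 1) M) : ℝ :=
  (1 / ((A : ℝ) * M)) * ∑ m : Fin M, ∑ l ∈ Finset.Icc 1 A,
    ∑ y : Fin (A + N - 1) → Y, seqProb Q star (c m) l y * max ((dec.τ y : ℝ) - l) 0

/-- The asynchronism exponent `α` is achievable at rate `R`: for every `ε > 0` and all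
sufficiently large `N` there is a codebook/decoder pair operating at asynchronism level
`A = ⌈e^{(α-ε)N}⌉` with rate at least `R - ε` and error probability at most `ε`. -/
def AchievableAt [Fintype X] [Fintype Y] (Q : X → Y → ℝ) (star : X) (α R : ℝ) : Prop :=
  ∀ ε : ℝ, 0 < ε → ∃ N₀ : ℕ, ∀ N ≥ N₀, ∃ M : ℕ, 2 ≤ M ∧
    ∃ (c : Fin M → Fin N → X)
      (dec : Decoder Y (⌈Real.exp ((α - ε) * N)⌉₊ + N - 1) M),
      errProb Q star c ⌈Real.exp ((α - ε) * N)⌉₊ dec ≤ ε ∧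
      R - ε ≤ Real.log M / expDelay Q star c ⌈Real.exp ((α - ε) * N)⌉₊ dec

/-! ### Products over a window of consecutive times -/

/-- The 0-based position in `Fin T` of the `i`-th time of a window of length `n` that starts at
the 1-based time `l`. -/
def pos {T n l : ℕ} (hl : 1 ≤ l) (hT : l + n ≤ T + 1) (i : Fin n) : Fin T :=
  ⟨l - 1 + i, by omega⟩

@[to_additive]
lemma prod_window {β : Type*} [CommMonoid β] {T n l : ℕ} (hl : 1 ≤ l) (hT : l + n ≤ T + 1)
    (F : Fin n → Fin T → β) :
    (∏ t : Fin T, if h : l ≤ (t : ℕ) + 1 ∧ (t : ℕ) + 1 < l + n then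
      F ⟨(t : ℕ) + 1 - l, by omega⟩ t else 1) = ∏ i, F i (pos hl hT i) := by
  symm
  refine Fintype.prod_of_injective (pos hl hT) ?_ _ _ ?_ ?_
  · intro i j h
    have := congrArg Fin.val h
    simp only [pos] at this
    exact Fin.ext (by omega)
  · intro t ht
    rw [dif_neg]
    rintro ⟨h1, h2⟩
    exact ht ⟨⟨(t : ℕ) + 1 - l, by omega⟩, Fin.ext (by simp only [pos]; omega)⟩
  · intro i
    have h : l ≤ ((pos hl hT i : Fin T) : ℕ) + 1 ∧ ((pos hl hT i : Fin T) : ℕ) + 1 < l + n := by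
      simp only [pos]; omega
    rw [dif_pos h]
    congr 1
    exact Fin.ext (by simp only [pos]; omega)

/-- Probability of the output `y` when the input sequence is `x`. -/
noncomputable def pathProb (Q : X → Y → ℝ) {T : ℕ} (x : Fin T → X) (y : Fin T → Y) : ℝ :=
  ∏ t, Q (x t) (y t)

/-- The channel input sequence when `c` is sent from time `l` on; noise symbol elsewhere. -/
def inp (star : X) {N T : ℕ} (c : Fin N → X) (l : ℕ) (t : Fin T) : X :=
  if h : l ≤ (t : ℕ) + 1 ∧ (t : ℕ) + 1 < l + N then c ⟨(t : ℕ) + 1 - l, by omega⟩ else star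

lemma seqProb_eq (Q : X → Y → ℝ) (star : X) {N T : ℕ} (c : Fin N → X) (l : ℕ) (y : Fin T → Y) :
    seqProb Q star c l y = pathProb Q (inp star c l) y := rfl

/-- Product of the weights `G i` along the output window of length `n` starting at time `l`. -/
noncomputable def winP {T : ℕ} (l n : ℕ) (G : Fin n → Y → ℝ) (y : Fin T → Y) : ℝ :=
  ∏ t : Fin T, if h : l ≤ (t : ℕ) + 1 ∧ (t : ℕ) + 1 < l + n then
    G ⟨(t : ℕ) + 1 - l, by omega⟩ (y t) else 1

/-- Sum of the scores `F i` along the output window of length `n` starting at time `l`. -/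
noncomputable def winS {T : ℕ} (l n : ℕ) (F : Fin n → Y → ℝ) (y : Fin T → Y) : ℝ :=
  ∑ t : Fin T, if h : l ≤ (t : ℕ) + 1 ∧ (t : ℕ) + 1 < l + n then
    F ⟨(t : ℕ) + 1 - l, by omega⟩ (y t) else 0

lemma winP_eq {T n l : ℕ} (hl : 1 ≤ l) (hT : l + n ≤ T + 1) (G : Fin n → Y → ℝ) (y : Fin T → Y) :
    winP l n G y = ∏ i, G i (y (pos hl hT i)) :=
  prod_window hl hT (fun i t => G i (y t))

lemma winS_eq {T n l : ℕ} (hl : 1 ≤ l) (hT : l + n ≤ T + 1) (F : Fin n → Y → ℝ) (y : Fin T → Y) :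
    winS l n F y = ∑ i, F i (y (pos hl hT i)) :=
  sum_window hl hT (fun i t => F i (y t))

lemma exp_winS {T n l : ℕ} (s : ℝ) (F : Fin n → Y → ℝ) (y : Fin T → Y) :
    Real.exp (s * winS l n F y) = winP l n (fun i b => Real.exp (s * F i b)) y := by
  unfold winS winP
  rw [Finset.mul_sum, Real.exp_sum]
  refine Finset.prod_congr rfl fun t _ => ?_
  split_ifs <;> simp

lemma winP_nonneg {T n l : ℕ} {G : Fin n → Y → ℝ} (hG : ∀ i b, 0 ≤ G i b) (y : Fin T → Y) :
    0 ≤ winP l n G y := by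
  unfold winP
  refine Finset.prod_nonneg fun t _ => ?_
  split_ifs
  · exact hG _ _
  · exact zero_le_one

lemma pathProb_nonneg [Fintype X] [Fintype Y] {Q : X → Y → ℝ} (hQ : IsChannel Q) {T : ℕ}
    (x : Fin T → X) (y : Fin T → Y) : 0 ≤ pathProb Q x y :=
  Finset.prod_nonneg fun _ _ => (hQ _).1 _

/-- Outputs at distinct times are independent, so the expectation of a window product is the
product of the one-letter expectations. -/
lemma expect_winP [Fintype X] [Fintype Y] {Q : X → Y → ℝ} (hQ : IsChannel Q) {T n l : ℕ}
    (hl : 1 ≤ l) (hT : l + n ≤ T + 1) (x : Fin T → X) (G : Fin n → Y → ℝ) :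
    ∑ y, pathProb Q x y * winP l n G y = ∏ i, ∑ b, Q (x (pos hl hT i)) b * G i b := by
  rw [← prod_window hl hT (fun i t => ∑ b, Q (x t) b * G i b)]
  have h1 : ∀ y : Fin T → Y, pathProb Q x y * winP l n G y = ∏ t : Fin T, (Q (x t) (y t) *
      (if h : l ≤ (t : ℕ) + 1 ∧ (t : ℕ) + 1 < l + n then
        G ⟨(t : ℕ) + 1 - l, by omega⟩ (y t) else 1)) := by
    intro y
    rw [pathProb, winP, Finset.prod_mul_distrib]
  simp_rw [h1]
  rw [← Fintype.prod_sum (fun (t : Fin T) (b : Y) => Q (x t) b *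
      (if h : l ≤ (t : ℕ) + 1 ∧ (t : ℕ) + 1 < l + n then
        G ⟨(t : ℕ) + 1 - l, by omega⟩ b else 1))]
  refine Finset.prod_congr rfl fun t _ => ?_
  split_ifs
  · rfl
  · simpa using (hQ (x t)).2

lemma expect_exp [Fintype X] [Fintype Y] {Q : X → Y → ℝ} (hQ : IsChannel Q) {T n l : ℕ}
    (hl : 1 ≤ l) (hT : l + n ≤ T + 1) (x : Fin T → X) (s : ℝ) (F : Fin n → Y → ℝ) :
    ∑ y, pathProb Q x y * Real.exp (s * winS l n F y)
      = ∏ i, ∑ b, Q (x (pos hl hT i)) b * Real.exp (s * F i b) := by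
  simp_rw [exp_winS]
  exact expect_winP hQ hl hT x _

lemma sum_pathProb [Fintype X] [Fintype Y] {Q : X → Y → ℝ} (hQ : IsChannel Q) {T : ℕ}
    (x : Fin T → X) : ∑ y, pathProb Q x y = 1 := by
  unfold pathProb
  rw [← Fintype.prod_sum (fun (t : Fin T) (b : Y) => Q (x t) b)]
  exact Finset.prod_eq_one fun t _ => (hQ _).2

lemma inp_pos (star : X) {N T l : ℕ} (hl : 1 ≤ l) (hT : l + N ≤ T + 1) (c : Fin N → X)
    (i : Fin N) : inp star c l (pos hl hT i) = c i := by
  have h : l ≤ ((pos hl hT i : Fin T) : ℕ) + 1 ∧ ((pos hl hT i : Fin T) : ℕ) + 1 < l + N := by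
    simp only [pos]; omega
  rw [inp, dif_pos h]
  congr 1
  exact Fin.ext (by simp only [pos]; omega)

/-- A window disjoint from the transmission interval sees only noise. -/
lemma inp_far (star : X) {N n T l l' : ℕ} (hl' : 1 ≤ l') (hT : l' + n ≤ T + 1) (c : Fin N → X)
    (hnN : n ≤ N) (hfar : l' + N ≤ l ∨ l + N ≤ l') (i : Fin n) :
    inp star c l (pos hl' hT i) = star := by
  rw [inp, dif_neg]
  simp only [pos]; omega

/-- A sum over all starting times, bounded by `u` at times whose window is disjoint from the one
at `l`, and by `v` at the at most `2N` remaining times. -/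
lemma near_far {A N l : ℕ} {f : ℕ → ℝ} {u v : ℝ} (hu : 0 ≤ u) (hv : 0 ≤ v)
    (hfar : ∀ l' ∈ Finset.Icc 1 A, (l' + N ≤ l ∨ l + N ≤ l') → f l' ≤ u)
    (hnear : ∀ l' ∈ Finset.Icc 1 A, f l' ≤ v) :
    ∑ l' ∈ Finset.Icc 1 A, f l' ≤ A * u + 2 * N * v := by
  classical
  have h1 : ∀ l' ∈ Finset.Icc 1 A,
      f l' ≤ u + if l' ∈ Finset.Icc (l + 1 - N) (l + N) then v else 0 := by
    intro l' hl'
    by_cases h : l' + N ≤ l ∨ l + N ≤ l'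
    · have := hfar l' hl' h
      split_ifs <;> linarith
    · rw [if_pos (by rw [Finset.mem_Icc]; omega)]
      linarith [hnear l' hl']
  refine (Finset.sum_le_sum h1).trans ?_
  rw [Finset.sum_add_distrib, Finset.sum_const, Nat.card_Icc, ← Finset.sum_filter,
    Finset.sum_const, nsmul_eq_mul, nsmul_eq_mul]
  have h2 : ((Finset.Icc 1 A).filter (fun l' => l' ∈ Finset.Icc (l + 1 - N) (l + N))).card
      ≤ 2 * N := by
    by_cases hN : N = 0
    · subst hN
      simp
    refine (Finset.card_le_card (t := Finset.Icc (l + 1 - N) (l + N)) ?_).trans ?_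
    · intro z hz
      exact (Finset.mem_filter.1 hz).2
    · rw [Nat.card_Icc]; omega
  have h3 : (((Finset.Icc 1 A).filter
      (fun l' => l' ∈ Finset.Icc (l + 1 - N) (l + N))).card : ℝ) ≤ 2 * N := by exact_mod_cast h2
  have := mul_le_mul_of_nonneg_right h3 hv
  simp only [Nat.add_sub_cancel]
  linarith

/-! ### One-letter estimates -/

open Filter Topology in
/-- One-letter Chernoff bound: the moment generating function of a score with mean below `d` is at
most `exp (s * d)` for small `s > 0`, as `exp u ≤ 1 + u + u ^ 2` for `|u| ≤ 1`. -/
lemma chernoff {A : Type*} [Fintype A] {μ : A → ℝ} (hμ : IsDist μ) (h : A → ℝ) {d : ℝ}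
    (hd : ∑ a, μ a * h a < d) :
    ∀ᶠ s in 𝓝[>] (0 : ℝ), ∑ a, μ a * Real.exp (s * h a) ≤ Real.exp (s * d) := by
  have h1 : ∀ᶠ s in 𝓝[>] (0 : ℝ), ∀ a, |s * h a| < 1 := by
    rw [eventually_all]
    intro a
    have : Tendsto (fun s : ℝ => |s * h a|) (𝓝 0) (𝓝 0) := by
      have : Continuous (fun s : ℝ => |s * h a|) := by fun_prop
      simpa using this.tendsto 0
    exact (this.mono_left nhdsWithin_le_nhds).eventually (gt_mem_nhds one_pos)
  have h2 : ∀ᶠ s in 𝓝[>] (0 : ℝ), s * ∑ a, μ a * h a ^ 2 < d - ∑ a, μ a * h a := by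
    have : Tendsto (fun s : ℝ => s * ∑ a, μ a * h a ^ 2) (𝓝 0) (𝓝 0) := by
      have : Continuous (fun s : ℝ => s * ∑ a, μ a * h a ^ 2) := by fun_prop
      simpa using this.tendsto 0
    exact (this.mono_left nhdsWithin_le_nhds).eventually (gt_mem_nhds (sub_pos.2 hd))
  filter_upwards [h1, h2, self_mem_nhdsWithin] with s hs1 hs2 hs0
  have hs0 : 0 < s := hs0
  calc ∑ a, μ a * Real.exp (s * h a)
      ≤ ∑ a, (μ a + s * (μ a * h a) + s ^ 2 * (μ a * h a ^ 2)) := by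
        refine Finset.sum_le_sum fun a _ => ?_
        have := (abs_le.1 (Real.abs_exp_sub_one_sub_id_le (hs1 a).le)).2
        have := mul_le_mul_of_nonneg_left this (hμ.1 a)
        nlinarith
    _ = 1 + s * ∑ a, μ a * h a + s * (s * ∑ a, μ a * h a ^ 2) := by
        rw [Finset.sum_add_distrib, Finset.sum_add_distrib, hμ.2, ← Finset.mul_sum,
          ← Finset.mul_sum]
        ring
    _ ≤ 1 + s * d := by nlinarith
    _ ≤ Real.exp (s * d) := by linarith [Real.add_one_le_exp (s * d)]

/-- Mixing a likelihood ratio `r` with the constant `1` makes it strictly positive and, by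
concavity of the logarithm, costs at most a factor `1 - η` in expected log-likelihood. -/
lemma log_mix {A : Type*} [Fintype A] {w r : A → ℝ} (hw : ∀ a, 0 ≤ w a)
    (hr : ∀ a, 0 < w a → 0 < r a) {η : ℝ} (h0 : 0 ≤ η) (h1 : η ≤ 1) :
    (1 - η) * ∑ a, w a * Real.log (r a) ≤ ∑ a, w a * Real.log ((1 - η) * r a + η) := by
  rw [Finset.mul_sum]
  refine Finset.sum_le_sum fun a _ => ?_
  rcases (hw a).eq_or_lt with h | h
  · simp [← h]
  · have := strictConcaveOn_log_Ioi.concaveOn.2 (x := r a) (y := 1) (hr a h) (Set.mem_Ioi.2 one_pos)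
      (sub_nonneg.2 h1) h0 (by ring)
    simp only [smul_eq_mul, Real.log_one, mul_zero, add_zero, mul_one] at this
    nlinarith

/-- Every exponent below `D(μ‖ν)`, finite or not, is smaller than the mean under `μ` of some
real-valued score `g` with `E_ν[exp g] ≤ 1`. -/
lemma exists_score {A : Type*} [Fintype A] {μ ν : A → ℝ} (hμ : IsDist μ) (hν : IsDist ν) {α : ℝ}
    (hα : 0 ≤ α) (h : ENNReal.ofReal α < klDiv μ ν) :
    ∃ g : A → ℝ, ∑ a, ν a * Real.exp (g a) ≤ 1 ∧ α < ∑ a, μ a * g a := by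
  classical
  unfold klDiv at h
  split_ifs at h with hac
  · set D := ∑ a, μ a * Real.log (μ a / ν a)
    have hD : α < D := by
      by_contra hc
      exact absurd (ENNReal.ofReal_le_ofReal (not_lt.1 hc)) (not_le.2 h)
    have hD0 : 0 < D := hα.trans_lt hD
    obtain ⟨β, hβ1, hβ2⟩ := exists_between hD
    set η := 1 - β / D with hη
    have hβD : β / D < 1 := (div_lt_one hD0).2 hβ2
    have hβ0 : 0 < β / D := div_pos (hα.trans_lt hβ1) hD0
    have hpos : ∀ a, 0 < (1 - η) * (μ a / ν a) + η := fun a => by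
      have : 0 ≤ (1 - η) * (μ a / ν a) :=
        mul_nonneg (by linarith) (div_nonneg (hμ.1 a) (hν.1 a))
      linarith
    refine ⟨fun a => Real.log ((1 - η) * (μ a / ν a) + η), ?_, ?_⟩
    · simp_rw [Real.exp_log (hpos _)]
      have : ∀ a, ν a * ((1 - η) * (μ a / ν a) + η) = (1 - η) * μ a + η * ν a := by
        intro a
        by_cases h0 : ν a = 0
        · simp [h0, hac a h0]
        · field_simp
      simp_rw [this]
      rw [Finset.sum_add_distrib, ← Finset.mul_sum, ← Finset.mul_sum, hμ.2, hν.2]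
      linarith
    · have := log_mix (w := μ) (r := fun a => μ a / ν a) hμ.1 (fun a ha => by
        refine div_pos ha ((hν.1 a).lt_of_ne fun h0 => ?_)
        rw [hac a h0.symm] at ha
        exact lt_irrefl _ ha) (η := η) (by linarith) (by linarith)
      have hβe : (1 - η) * D = β := by rw [hη]; field_simp; ring
      linarith
  · push Not at hac
    obtain ⟨a0, ha1, ha2⟩ := hac
    have hp : 0 < μ a0 := (hμ.1 a0).lt_of_ne (Ne.symm ha2)
    refine ⟨fun a => if a = a0 then (α + 1) / μ a0 else 0, ?_, ?_⟩
    · rw [← hν.2]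
      refine Finset.sum_le_sum fun a _ => ?_
      by_cases ha : a = a0
      · simp [ha, ha1]
      · simp [ha]
    · simp only [mul_ite, mul_zero, Finset.sum_ite_eq', Finset.mem_univ, if_true]
      field_simp
      linarith

/-- A positive capacity gives an input distribution `P` and a finite score with positive mean under
`PQ` whose exponential has mean at most `1` under `P` for every fixed output letter. -/
lemma exists_info_score [Fintype X] [Fintype Y] {Q : X → Y → ℝ} (hQ : IsChannel Q)
    (hC : 0 < capacity Q) :
    ∃ (P : X → ℝ) (g : X → Y → ℝ), IsDist P ∧ (∀ b, ∑ x, P x * Real.exp (g x b) ≤ 1) ∧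
      0 < ∑ p : X × Y, P p.1 * Q p.1 p.2 * g p.1 p.2 := by
  classical
  have hex : ∃ P : X → ℝ, IsDist P ∧ 0 < mi (joint P Q) := by
    by_contra hc
    push Not at hc
    refine absurd hC (not_lt.2 (Real.sSup_nonpos ?_))
    rintro v ⟨P, hP, rfl⟩
    exact hc P hP
  obtain ⟨P, hP, hI⟩ := hex
  set W : Y → ℝ := fun b => ∑ x, P x * Q x b with hW
  have hW0 : ∀ b, 0 ≤ W b := fun b =>
    Finset.sum_nonneg fun x _ => mul_nonneg (hP.1 x) ((hQ x).1 b)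
  have hpos : ∀ x b, 0 < (1 - 1 / 2) * (Q x b / W b) + 1 / 2 := fun x b => by
    have : 0 ≤ Q x b / W b := div_nonneg ((hQ x).1 b) (hW0 b)
    linarith
  refine ⟨P, fun x b => Real.log ((1 - 1 / 2) * (Q x b / W b) + 1 / 2), hP, fun b => ?_, ?_⟩
  · simp_rw [Real.exp_log (hpos _ _)]
    have h1 : ∑ x, P x * ((1 - 1 / 2) * (Q x b / W b) + 1 / 2)
        = 1 / 2 * ((∑ x, P x * Q x b) / W b) + 1 / 2 * ∑ x, P x := by
      rw [Finset.sum_div, Finset.mul_sum, Finset.mul_sum, ← Finset.sum_add_distrib]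
      exact Finset.sum_congr rfl fun x _ => by ring
    rw [h1, hP.2]
    have : W b / W b ≤ 1 := div_self_le_one _
    change 1 / 2 * (W b / W b) + _ ≤ _
    linarith
  · have hWpos : ∀ p : X × Y, 0 < P p.1 * Q p.1 p.2 → 0 < W p.2 := fun p hp =>
      hp.trans_le (Finset.single_le_sum (f := fun x => P x * Q x p.2)
        (fun x _ => mul_nonneg (hP.1 x) ((hQ x).1 _)) (Finset.mem_univ p.1))
    have hQpos : ∀ p : X × Y, 0 < P p.1 * Q p.1 p.2 → 0 < Q p.1 p.2 := fun p hp =>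
      pos_of_mul_pos_right hp (hP.1 _)
    have h2 := log_mix (w := fun p : X × Y => P p.1 * Q p.1 p.2)
      (r := fun p => Q p.1 p.2 / W p.2) (fun p => mul_nonneg (hP.1 _) ((hQ _).1 _))
      (fun p hp => div_pos (hQpos p hp) (hWpos p hp)) (η := 1 / 2) (by norm_num) (by norm_num)
    have h3 : mi (joint P Q) = ∑ p : X × Y, P p.1 * Q p.1 p.2 * Real.log (Q p.1 p.2 / W p.2) := by
      unfold mi
      refine Finset.sum_congr rfl fun p _ => ?_
      by_cases hp : P p.1 = 0
      · simp [joint, hp]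
      · have hm : margX (joint P Q) p.1 = P p.1 := by
          simp only [margX, joint]
          rw [← Finset.mul_sum, (hQ _).2, mul_one]
        rw [hm]
        change P p.1 * Q p.1 p.2 * Real.log (P p.1 * Q p.1 p.2 / (P p.1 * W p.2)) = _
        rw [mul_div_mul_left _ _ hp]
    rw [h3] at hI
    linarith

/-! ### Random coding -/

/-- Probability of the codebook `C` when its words are drawn independently with law `w`. -/
noncomputable def bookProb {B : Type*} {M : ℕ} (w : B → ℝ) (C : Fin M → B) : ℝ := ∏ m, w (C m)

lemma sum_bookProb_one {B : Type*} [Fintype B] {M : ℕ} {w : B → ℝ} (hw : ∑ b, w b = 1)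
    (m : Fin M) (f : B → ℝ) : ∑ C, bookProb w C * f (C m) = ∑ b, w b * f b := by
  have h : ∀ C : Fin M → B, bookProb w C * f (C m)
      = ∏ j, (w (C j) * if j = m then f (C j) else 1) := by
    intro C
    rw [Finset.prod_mul_distrib, Finset.prod_ite_eq' Finset.univ m (fun j => f (C j))]
    simp [bookProb]
  simp_rw [h]
  rw [← Fintype.prod_sum (fun (j : Fin M) (b : B) => w b * if j = m then f b else 1),
    Finset.prod_eq_single m]
  · simp
  · intro j _ hj
    simpa [hj] using hw
  · simp

/-- Two distinct words of a random codebook are independent. -/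
lemma sum_bookProb_two {B : Type*} [Fintype B] {M : ℕ} {w : B → ℝ} (hw : ∑ b, w b = 1)
    {m m' : Fin M} (hm : m' ≠ m) (f g : B → ℝ) :
    ∑ C, bookProb w C * (f (C m) * g (C m')) = (∑ b, w b * f b) * ∑ b, w b * g b := by
  have h : ∀ C : Fin M → B, bookProb w C * (f (C m) * g (C m'))
      = ∏ j, (w (C j) * ((if j = m then f (C j) else 1) * if j = m' then g (C j) else 1)) := by
    intro C
    rw [Finset.prod_mul_distrib, Finset.prod_mul_distrib,
      Finset.prod_ite_eq' Finset.univ m (fun j => f (C j)),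
      Finset.prod_ite_eq' Finset.univ m' (fun j => g (C j))]
    simp [bookProb]
  simp_rw [h]
  rw [← Fintype.prod_sum (fun (j : Fin M) (b : B) =>
    w b * ((if j = m then f b else 1) * if j = m' then g b else 1)),
    ← Finset.mul_prod_erase _ _ (Finset.mem_univ m),
    ← Finset.mul_prod_erase _ _ (Finset.mem_erase.2 ⟨hm, Finset.mem_univ m'⟩),
    Finset.prod_eq_one, mul_one]
  · simp [hm, hm.symm]
  · intro j hj
    have h1 : j ≠ m' := (Finset.mem_erase.1 hj).1
    have h2 : j ≠ m := (Finset.mem_erase.1 (Finset.mem_erase.1 hj).2).1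
    simpa [h1, h2] using hw

/-- The codeword with a constant preamble `xs` followed by the information word `b`. -/
def preWord (xs : X) {n N : ℕ} (hn : n ≤ N) (b : Fin n → X) (i : Fin N) : X :=
  if h : (i : ℕ) < N - n then xs else b ⟨i - (N - n), by omega⟩

lemma inp_preamble (star xs : X) {n N T l : ℕ} (hn : n ≤ N) (hl : 1 ≤ l)
    (hT : l + (N - n) ≤ T + 1) (b : Fin n → X) (i : Fin (N - n)) :
    inp star (preWord xs hn b) l (pos hl hT i) = xs := by
  rw [inp, dif_pos (by simp only [pos]; omega), preWord, dif_pos (by simp only [pos]; omega)]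

lemma inp_info (star xs : X) {n N T l : ℕ} (hn : n ≤ N) (_hl : 1 ≤ l) (hl' : 1 ≤ l + (N - n))
    (hT : l + (N - n) + n ≤ T + 1) (b : Fin n → X) (i : Fin n) :
    inp star (preWord xs hn b) l (pos hl' hT i) = b i := by
  rw [inp, dif_pos (by simp only [pos]; omega), preWord, dif_neg (by simp only [pos]; omega)]
  congr 1
  exact Fin.ext (by simp only [pos]; omega)

/-- The decoder that observes the whole output and then decides according to `φ`. -/
def fullDecoder {T M : ℕ} (φ : (Fin T → Y) → Fin M) : Decoder Y T M where
  τ _ := T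
  φ := φ
  τ_le _ := le_rfl
  stopping _ _ _ := rfl
  meas y y' h := by rw [show y = y' from funext fun t => h t t.2]

lemma exists_le_of_avg {B : Type*} [Fintype B] {w e : B → ℝ} (hw0 : ∀ b, 0 ≤ w b)
    (hw : ∑ b, w b = 1) {K : ℝ} (h : ∑ b, w b * e b ≤ K) : ∃ b, e b ≤ K := by
  by_contra hc
  push Not at hc
  obtain ⟨b0, hb0⟩ : ∃ b, 0 < w b := by
    by_contra hn
    push Not at hn
    have := Finset.sum_nonpos (s := Finset.univ) (fun b _ => hn b)
    linarith
  have : ∑ b, w b * K < ∑ b, w b * e b :=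
    Finset.sum_lt_sum (fun b _ => mul_le_mul_of_nonneg_left (hc b).le (hw0 b))
      ⟨b0, Finset.mem_univ _, mul_lt_mul_of_pos_left (hc b0) hb0⟩
  rw [← Finset.sum_mul, hw] at this
  linarith

/-- Indicator that the preamble test succeeds at time `l`: the preamble score over the window of
length `k` starting at `l` reaches `log A`. -/
noncomputable def preTest (g : Y → ℝ) (k A : ℕ) {T : ℕ} (l : ℕ) (y : Fin T → Y) : ℝ :=
  open scoped Classical in
  if Real.log A ≤ winS l k (fun _ : Fin k => g) y then 1 else 0

/-- The expected number of times at which the preamble test succeeds is at most `2N + 1`: pure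
noise passes it with probability at most `1 / A`. -/
lemma sum_preTest_le [Fintype X] [Fintype Y] {Q : X → Y → ℝ} (hQ : IsChannel Q) (star : X)
    {g : Y → ℝ} (hg : ∑ b, Q star b * Real.exp (g b) ≤ 1) {k N A l : ℕ} (hk : k ≤ N) (hA : 1 ≤ A)
    (c : Fin N → X) :
    ∑ l' ∈ Finset.Icc 1 A, ∑ y : Fin (A + N - 1) → Y,
      pathProb Q (inp star c l) y * preTest g k A l' y ≤ 2 * N + 1 := by
  have hA0 : (0 : ℝ) < A := by exact_mod_cast hA
  refine (near_far (u := 1 / A) (v := 1) (N := N) (l := l) (by positivity) zero_le_one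
    ?_ ?_).trans ?_
  · intro l' hl' hfar
    obtain ⟨h1, h2⟩ := Finset.mem_Icc.1 hl'
    have hT : l' + k ≤ A + N - 1 + 1 := by omega
    calc ∑ y : Fin (A + N - 1) → Y, pathProb Q (inp star c l) y * preTest g k A l' y
        ≤ ∑ y : Fin (A + N - 1) → Y, 1 / A * (pathProb Q (inp star c l) y
            * Real.exp (1 * winS l' k (fun _ : Fin k => g) y)) := by
          refine Finset.sum_le_sum fun y _ => ?_
          rw [mul_left_comm]
          refine mul_le_mul_of_nonneg_left ?_ (pathProb_nonneg hQ _ _)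
          rw [preTest, one_mul]
          split_ifs with h
          · have := Real.exp_le_exp.2 h
            rw [Real.exp_log hA0] at this
            rw [one_div, inv_mul_eq_div, le_div_iff₀ hA0]
            linarith
          · positivity
      _ ≤ 1 / A := by
          rw [← Finset.mul_sum, expect_exp hQ h1 hT]
          refine mul_le_of_le_one_right (by positivity) (Finset.prod_le_one ?_ ?_)
          · intro i _
            exact Finset.sum_nonneg fun b _ => mul_nonneg ((hQ _).1 _) (Real.exp_pos _).le
          · intro i _
            rw [inp_far star h1 hT c hk hfar]
            simpa using hg
  · intro l' _
    rw [← sum_pathProb hQ (inp star c l : Fin (A + N - 1) → X)]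
    refine Finset.sum_le_sum fun y _ => mul_le_of_le_one_right (pathProb_nonneg hQ _ _) ?_
    rw [preTest]
    split_ifs <;> norm_num
  · rw [mul_one_div_cancel hA0.ne']
    linarith

/-- Non-asymptotic random coding bound. A message is accepted when, at some time, the preamble
test succeeds and the information score of its word reaches `θ`. The three terms
bound the probability that the preamble is missed, that the transmitted word is missed, and that
a wrong word is accepted. -/
lemma code_exists [Fintype X] [Fintype Y] {Q : X → Y → ℝ} (hQ : IsChannel Q) (star xs : X)
    {P : X → ℝ} (hP : IsDist P) {g₁ : Y → ℝ} {g₂ : X → Y → ℝ}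
    (hg₁ : ∑ b, Q star b * Real.exp (g₁ b) ≤ 1) (hg₂ : ∀ b, ∑ x, P x * Real.exp (g₂ x b) ≤ 1)
    {s₁ s₂ ρ₁ ρ₂ : ℝ} (hs₁ : 0 < s₁) (hs₂ : 0 < s₂)
    (hρ₁ : ∑ b, Q xs b * Real.exp (-s₁ * g₁ b) ≤ ρ₁)
    (hρ₂ : ∑ x, P x * ∑ b, Q x b * Real.exp (-s₂ * g₂ x b) ≤ ρ₂)
    {n N M A : ℕ} (hn : n ≤ N) (hA : 1 ≤ A) (hM : 1 ≤ M) (θ : ℝ) :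
    ∃ (c : Fin M → Fin N → X) (dec : Decoder Y (A + N - 1) M),
      errProb Q star c A dec ≤ Real.exp (s₁ * Real.log A) * ρ₁ ^ (N - n)
        + Real.exp (s₂ * θ) * ρ₂ ^ n + M * (Real.exp (-θ) * (2 * N + 1)) := by
  classical
  set E₁ := Real.exp (s₁ * Real.log A) * ρ₁ ^ (N - n) with hE₁
  set E₂ := Real.exp (s₂ * θ) * ρ₂ ^ n with hE₂
  set E₃ := Real.exp (-θ) * (2 * N + 1) with hE₃
  have hE₃0 : 0 ≤ E₃ := by positivity
  have hA0 : (0 : ℝ) < A := by exact_mod_cast hA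
  have hM0 : (0 : ℝ) < M := by exact_mod_cast hM
  -- law of the random information words
  let w : (Fin n → X) → ℝ := fun b => ∏ i, P (b i)
  have hw0 : ∀ b, 0 ≤ w b := fun b => Finset.prod_nonneg fun i _ => hP.1 _
  have hw1 : ∑ b, w b = 1 := by
    change ∑ b : Fin n → X, ∏ i, P (b i) = 1
    rw [← Fintype.prod_sum (fun (_ : Fin n) (x : X) => P x)]
    exact Finset.prod_eq_one fun i _ => hP.2
  let W : (Fin M → Fin n → X) → ℝ := bookProb w
  have hW0 : ∀ C, 0 ≤ W C := fun C => Finset.prod_nonneg fun m _ => hw0 _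
  have hW1 : ∑ C, W C = 1 := by
    have := sum_bookProb_one hw1 (⟨0, hM⟩ : Fin M) (fun _ => 1)
    simpa [hw1] using this
  let p : (Fin n → X) → ℕ → (Fin (A + N - 1) → Y) → ℝ := fun b l y =>
    pathProb Q (inp star (preWord xs hn b) l) y
  have hp0 : ∀ b l y, 0 ≤ p b l y := fun b l y => pathProb_nonneg hQ _ _
  let S₁ : ℕ → (Fin (A + N - 1) → Y) → ℝ := fun l y =>
    winS l (N - n) (fun _ : Fin (N - n) => g₁) y
  let S₂ : (Fin n → X) → ℕ → (Fin (A + N - 1) → Y) → ℝ := fun b l y =>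
    winS (l + (N - n)) n (fun i => g₂ (b i)) y
  let t₁ : ℕ → (Fin (A + N - 1) → Y) → ℝ := fun l y => preTest g₁ (N - n) A l y
  have ht₁0 : ∀ l y, 0 ≤ t₁ l y := fun l y => by
    change 0 ≤ preTest _ _ _ _ _
    rw [preTest]; split_ifs <;> norm_num
  let φ : (Fin M → Fin n → X) → (Fin (A + N - 1) → Y) → Fin M := fun C y =>
    if h : ∃ m, ∃ l ∈ Finset.Icc 1 A, Real.log A ≤ S₁ l y ∧ θ ≤ S₂ (C m) l y then h.choose
    else ⟨0, hM⟩
  -- union bound on the three possible causes of an error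
  have hunion : ∀ C m l y, l ∈ Finset.Icc 1 A → (if φ C y = m then (0 : ℝ) else 1) ≤
      Real.exp (s₁ * Real.log A) * Real.exp (-s₁ * S₁ l y)
      + Real.exp (s₂ * θ) * Real.exp (-s₂ * S₂ (C m) l y)
      + ∑ m' ∈ Finset.univ.erase m, ∑ l' ∈ Finset.Icc 1 A,
          t₁ l' y * (Real.exp (-θ) * Real.exp (1 * S₂ (C m') l' y)) := by
    intro C m l y hl
    have hnn : ∀ m', ∀ l', 0 ≤ t₁ l' y * (Real.exp (-θ) * Real.exp (1 * S₂ (C m') l' y)) :=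
      fun m' l' => mul_nonneg (ht₁0 _ _) (by positivity)
    have hnn3 : 0 ≤ ∑ m' ∈ Finset.univ.erase m, ∑ l' ∈ Finset.Icc 1 A,
          t₁ l' y * (Real.exp (-θ) * Real.exp (1 * S₂ (C m') l' y)) :=
      Finset.sum_nonneg fun m' _ => Finset.sum_nonneg fun l' _ => hnn m' l'
    split_ifs with hφ
    · positivity
    rw [← Real.exp_add, ← Real.exp_add]
    by_cases h1 : Real.log A ≤ S₁ l y
    · by_cases h2 : θ ≤ S₂ (C m) l y
      · have hex : ∃ m, ∃ l ∈ Finset.Icc 1 A, Real.log A ≤ S₁ l y ∧ θ ≤ S₂ (C m) l y :=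
          ⟨m, l, hl, h1, h2⟩
        have hφe : φ C y = hex.choose := dif_pos hex
        obtain ⟨l', hl', h1', h2'⟩ := hex.choose_spec
        rw [← hφe] at h2'
        have hone : 1 ≤ t₁ l' y * (Real.exp (-θ) * Real.exp (1 * S₂ (C (φ C y)) l' y)) := by
          have : t₁ l' y = 1 := if_pos h1'
          rw [this, one_mul, ← Real.exp_add]
          exact Real.one_le_exp (by linarith)
        have := (Finset.single_le_sum (f := fun l' => t₁ l' y *
          (Real.exp (-θ) * Real.exp (1 * S₂ (C (φ C y)) l' y)))
          (fun l' _ => hnn _ l') hl').trans (Finset.single_le_sum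
          (f := fun m' => ∑ l' ∈ Finset.Icc 1 A, t₁ l' y *
            (Real.exp (-θ) * Real.exp (1 * S₂ (C m') l' y)))
          (fun m' _ => Finset.sum_nonneg fun l' _ => hnn m' l')
          (Finset.mem_erase.2 ⟨hφ, Finset.mem_univ _⟩))
        have h3 := Real.exp_pos (s₁ * Real.log A + -s₁ * S₁ l y)
        have h4 := Real.exp_pos (s₂ * θ + -s₂ * S₂ (C m) l y)
        linarith
      · have h3 := Real.exp_pos (s₁ * Real.log A + -s₁ * S₁ l y)
        have h4 : 1 ≤ Real.exp (s₂ * θ + -s₂ * S₂ (C m) l y) :=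
          Real.one_le_exp (by nlinarith [not_le.1 h2])
        linarith
    · have h3 : 1 ≤ Real.exp (s₁ * Real.log A + -s₁ * S₁ l y) :=
        Real.one_le_exp (by nlinarith [not_le.1 h1])
      have h4 := Real.exp_pos (s₂ * θ + -s₂ * S₂ (C m) l y)
      linarith
  -- the transmitted preamble is missed
  have hb1 : ∀ b, ∀ l ∈ Finset.Icc 1 A,
      ∑ y, p b l y * (Real.exp (s₁ * Real.log A) * Real.exp (-s₁ * S₁ l y)) ≤ E₁ := by
    intro b l hl
    obtain ⟨h1, h2⟩ := Finset.mem_Icc.1 hl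
    have hT : l + (N - n) ≤ A + N - 1 + 1 := by omega
    simp_rw [mul_left_comm (p b l _)]
    rw [← Finset.mul_sum, expect_exp hQ h1 hT]
    simp_rw [inp_preamble star xs hn h1 hT b]
    rw [Finset.prod_const, Finset.card_univ, Fintype.card_fin, hE₁]
    refine mul_le_mul_of_nonneg_left (pow_le_pow_left₀ ?_ hρ₁ _) (Real.exp_pos _).le
    exact Finset.sum_nonneg fun b _ => mul_nonneg ((hQ _).1 _) (Real.exp_pos _).le
  -- the transmitted information word is missed
  have hb2 : ∀ l ∈ Finset.Icc 1 A,
      ∑ b, w b * ∑ y, p b l y * (Real.exp (s₂ * θ) * Real.exp (-s₂ * S₂ b l y)) ≤ E₂ := by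
    intro l hl
    obtain ⟨h1, h2⟩ := Finset.mem_Icc.1 hl
    have h1' : 1 ≤ l + (N - n) := by omega
    have hT : l + (N - n) + n ≤ A + N - 1 + 1 := by omega
    have hin : ∀ b : Fin n → X, w b * ∑ y, p b l y * (Real.exp (s₂ * θ)
        * Real.exp (-s₂ * S₂ b l y)) = Real.exp (s₂ * θ) *
          ∏ i, (P (b i) * ∑ z, Q (b i) z * Real.exp (-s₂ * g₂ (b i) z)) := by
      intro b
      simp_rw [mul_left_comm (p b l _)]
      rw [← Finset.mul_sum, expect_exp hQ h1' hT]
      simp_rw [inp_info star xs hn h1 h1' hT b]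
      rw [mul_left_comm, ← Finset.prod_mul_distrib]
    simp_rw [hin]
    rw [← Finset.mul_sum, ← Fintype.prod_sum (fun (_ : Fin n) (x : X) =>
      P x * ∑ z, Q x z * Real.exp (-s₂ * g₂ x z)), Finset.prod_const, Finset.card_univ,
      Fintype.card_fin, hE₂]
    refine mul_le_mul_of_nonneg_left (pow_le_pow_left₀ ?_ hρ₂ _) (Real.exp_pos _).le
    exact Finset.sum_nonneg fun x _ => mul_nonneg (hP.1 x) (Finset.sum_nonneg fun b _ =>
      mul_nonneg ((hQ _).1 _) (Real.exp_pos _).le)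
  -- an independent word passes the information test with small probability on any output
  have hb3 : ∀ l' ∈ Finset.Icc 1 A, ∀ y,
      ∑ b, w b * (Real.exp (-θ) * Real.exp (1 * S₂ b l' y)) ≤ Real.exp (-θ) := by
    intro l' hl' y
    obtain ⟨h1, h2⟩ := Finset.mem_Icc.1 hl'
    have h1' : 1 ≤ l' + (N - n) := by omega
    have hT : l' + (N - n) + n ≤ A + N - 1 + 1 := by omega
    have hin : ∀ b : Fin n → X, w b * (Real.exp (-θ) * Real.exp (1 * S₂ b l' y))
        = Real.exp (-θ) * ∏ i, (P (b i) * Real.exp (g₂ (b i) (y (pos h1' hT i)))) := by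
      intro b
      change _ * (_ * Real.exp (1 * winS _ _ _ _)) = _
      rw [one_mul, winS_eq h1' hT, Real.exp_sum, mul_left_comm, ← Finset.prod_mul_distrib]
    simp_rw [hin]
    rw [← Finset.mul_sum, ← Fintype.prod_sum (fun (i : Fin n) (x : X) =>
      P x * Real.exp (g₂ x (y (pos h1' hT i))))]
    refine mul_le_of_le_one_right (Real.exp_pos _).le (Finset.prod_le_one ?_ fun i _ => hg₂ _)
    exact fun i _ => Finset.sum_nonneg fun x _ => mul_nonneg (hP.1 x) (Real.exp_pos _).le
  have hb3' : ∀ m m' : Fin M, m' ≠ m → ∀ l,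
      ∑ C, W C * ∑ y, p (C m) l y * ∑ l' ∈ Finset.Icc 1 A,
        t₁ l' y * (Real.exp (-θ) * Real.exp (1 * S₂ (C m') l' y)) ≤ E₃ := by
    intro m m' hm l
    calc ∑ C, W C * ∑ y, p (C m) l y * ∑ l' ∈ Finset.Icc 1 A,
        t₁ l' y * (Real.exp (-θ) * Real.exp (1 * S₂ (C m') l' y))
        = ∑ l' ∈ Finset.Icc 1 A, ∑ y, t₁ l' y * ∑ C, W C * (p (C m) l y *
            (Real.exp (-θ) * Real.exp (1 * S₂ (C m') l' y))) := by
          simp_rw [Finset.mul_sum]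
          rw [Finset.sum_comm]
          simp_rw [Finset.sum_comm (s := (Finset.univ : Finset (Fin M → Fin n → X)))
            (t := Finset.Icc 1 A)]
          rw [Finset.sum_comm]
          refine Finset.sum_congr rfl fun l' _ => Finset.sum_congr rfl fun y _ =>
            Finset.sum_congr rfl fun C _ => by ring
      _ = ∑ l' ∈ Finset.Icc 1 A, ∑ y, t₁ l' y * ((∑ b, w b * p b l y) *
            ∑ b, w b * (Real.exp (-θ) * Real.exp (1 * S₂ b l' y))) := by
          refine Finset.sum_congr rfl fun l' _ => Finset.sum_congr rfl fun y _ => ?_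
          rw [← sum_bookProb_two hw1 hm (fun b => p b l y)
            (fun b => Real.exp (-θ) * Real.exp (1 * S₂ b l' y))]
      _ ≤ ∑ l' ∈ Finset.Icc 1 A, ∑ y, t₁ l' y * ((∑ b, w b * p b l y) * Real.exp (-θ)) := by
          refine Finset.sum_le_sum fun l' hl' => Finset.sum_le_sum fun y _ => ?_
          refine mul_le_mul_of_nonneg_left (mul_le_mul_of_nonneg_left (hb3 l' hl' y) ?_) (ht₁0 _ _)
          exact Finset.sum_nonneg fun b _ => mul_nonneg (hw0 b) (hp0 _ _ _)
      _ = Real.exp (-θ) * ∑ b, w b * ∑ l' ∈ Finset.Icc 1 A, ∑ y, p b l y * t₁ l' y := by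
          simp_rw [Finset.mul_sum, Finset.sum_mul, Finset.mul_sum]
          rw [Finset.sum_comm' (t' := Finset.univ) (s' := fun _ => Finset.Icc 1 A) (by simp)]
          simp_rw [Finset.sum_comm (s := Finset.Icc 1 A)
            (t := (Finset.univ : Finset (Fin n → X)))]
          rw [Finset.sum_comm]
          refine Finset.sum_congr rfl fun b _ => ?_
          rw [Finset.sum_comm]
          exact Finset.sum_congr rfl fun l' _ => Finset.sum_congr rfl fun y _ => by ring
      _ ≤ Real.exp (-θ) * ∑ b, w b * (2 * N + 1) := by
          refine mul_le_mul_of_nonneg_left (Finset.sum_le_sum fun b _ =>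
            mul_le_mul_of_nonneg_left ?_ (hw0 b)) (Real.exp_pos _).le
          exact sum_preTest_le hQ star hg₁ (Nat.sub_le _ _) hA _
      _ = E₃ := by rw [← Finset.sum_mul, hw1, one_mul]
  -- average over codebooks of the error probability for a given message and starting time
  have havg : ∀ m, ∀ l ∈ Finset.Icc 1 A,
      ∑ C, W C * ∑ y, (if φ C y = m then 0 else p (C m) l y) ≤ E₁ + E₂ + M * E₃ := by
    intro m l hl
    have hstep : ∀ C, ∑ y, (if φ C y = m then 0 else p (C m) l y) ≤
        ∑ y, p (C m) l y * (Real.exp (s₁ * Real.log A) * Real.exp (-s₁ * S₁ l y))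
        + ∑ y, p (C m) l y * (Real.exp (s₂ * θ) * Real.exp (-s₂ * S₂ (C m) l y))
        + ∑ m' ∈ Finset.univ.erase m, ∑ y, p (C m) l y * ∑ l' ∈ Finset.Icc 1 A,
          t₁ l' y * (Real.exp (-θ) * Real.exp (1 * S₂ (C m') l' y)) := by
      intro C
      rw [Finset.sum_comm (s := Finset.univ.erase m), ← Finset.sum_add_distrib,
        ← Finset.sum_add_distrib]
      refine Finset.sum_le_sum fun y _ => ?_
      rw [← Finset.mul_sum, ← mul_add, ← mul_add]
      refine le_trans (le_of_eq ?_) (mul_le_mul_of_nonneg_left (hunion C m l y hl) (hp0 _ _ _))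
      split_ifs <;> simp
    refine (Finset.sum_le_sum fun C _ => mul_le_mul_of_nonneg_left (hstep C) (hW0 C)).trans ?_
    simp_rw [mul_add]
    rw [Finset.sum_add_distrib, Finset.sum_add_distrib]
    refine add_le_add (add_le_add ?_ ?_) ?_
    · refine (Finset.sum_le_sum fun C _ =>
        mul_le_mul_of_nonneg_left (hb1 (C m) l hl) (hW0 C)).trans ?_
      rw [← Finset.sum_mul, hW1, one_mul]
    · exact (sum_bookProb_one hw1 m (fun b => ∑ y, p b l y *
        (Real.exp (s₂ * θ) * Real.exp (-s₂ * S₂ b l y)))).trans_le (hb2 l hl)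
    · simp_rw [Finset.mul_sum (Finset.univ.erase m)]
      rw [Finset.sum_comm]
      refine (Finset.sum_le_sum fun m' hm' =>
        hb3' m m' (Finset.mem_erase.1 hm').1 l).trans ?_
      rw [Finset.sum_const, nsmul_eq_mul]
      refine mul_le_mul_of_nonneg_right ?_ hE₃0
      have : (Finset.univ.erase m).card ≤ M := (Finset.card_erase_le).trans (by simp)
      exact_mod_cast this
  obtain ⟨C, hCe⟩ := exists_le_of_avg (w := W) (K := E₁ + E₂ + M * E₃)
    (e := fun C => (1 / ((A : ℝ) * M)) * ∑ m : Fin M, ∑ l ∈ Finset.Icc 1 A,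
      ∑ y, (if φ C y = m then 0 else p (C m) l y)) hW0 hW1 (by
    simp_rw [mul_left_comm (W _)]
    rw [← Finset.mul_sum]
    simp_rw [Finset.mul_sum (Finset.univ : Finset (Fin M)), Finset.mul_sum (Finset.Icc 1 A)]
    rw [Finset.sum_comm]
    simp_rw [Finset.sum_comm (s := (Finset.univ : Finset (Fin M → Fin n → X)))
      (t := Finset.Icc 1 A)]
    refine (mul_le_mul_of_nonneg_left (Finset.sum_le_sum fun m _ =>
      Finset.sum_le_sum fun l hl => havg m l hl) (by positivity)).trans_eq ?_
    simp only [Finset.sum_const, Nat.card_Icc, Finset.card_univ, Fintype.card_fin,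
      nsmul_eq_mul, Nat.add_sub_cancel]
    field_simp)
  exact ⟨fun m => preWord xs hn (C m), fullDecoder (φ C), hCe⟩

/-! ### Achievability -/

open Filter Topology in
lemma tendsto_lin_exp {c : ℝ} (hc : 0 < c) (u v K : ℝ) :
    Tendsto (fun N : ℕ => (u * N + v) * Real.exp (K - c * N)) atTop (𝓝 0) := by
  have hN : Tendsto (fun N : ℕ => c * (N : ℝ)) atTop atTop :=
    tendsto_natCast_atTop_atTop.const_mul_atTop hc
  have h1 := (Real.tendsto_pow_mul_exp_neg_atTop_nhds_zero 1).comp hN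
  have h0 := (Real.tendsto_pow_mul_exp_neg_atTop_nhds_zero 0).comp hN
  have h := ((h1.const_mul (u / c)).add (h0.const_mul v)).const_mul (Real.exp K)
  simp only [mul_zero, add_zero] at h
  refine h.congr fun N => ?_
  simp only [Function.comp, pow_one, pow_zero, one_mul]
  rw [sub_eq_add_neg, Real.exp_add]
  field_simp

/-- Every exponent below `max_x D(Q(·|x)‖Q(·|⋆))` is achieved with exponentially many messages: the
preamble repeats a letter `xs` of larger divergence over all but a fraction `1 / q` of the block,
and the rest carries a random codeword at a small positive rate. -/
lemma achieve [Fintype X] [Fintype Y] {Q : X → Y → ℝ} (hQ : IsChannel Q) (star : X)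
    (hC : 0 < capacity Q) {α : ℝ} (hα : 0 ≤ α)
    (h : ENNReal.ofReal α < ⨆ x : X, klDiv (Q x) (Q star)) :
    ∃ R' : ℝ, 0 < R' ∧ ∀ ε : ℝ, 0 < ε → ∃ N₀ : ℕ, ∀ N ≥ N₀, ∀ A : ℕ, 1 ≤ A →
      (A : ℝ) ≤ 2 * Real.exp (α * N) → ∃ M : ℕ, 2 ≤ M ∧ Real.exp (R' * N) ≤ (M : ℝ) ∧
        ∃ (c : Fin M → Fin N → X) (dec : Decoder Y (A + N - 1) M), errProb Q star c A dec ≤ ε := by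
  obtain ⟨xs, hxs⟩ := lt_iSup_iff.1 h
  obtain ⟨g₁, hg₁, hm₁⟩ := exists_score (hQ xs) (hQ star) hα hxs
  obtain ⟨P, g₂, hP, hg₂, hI⟩ := exists_info_score hQ hC
  obtain ⟨a, haα, ham⟩ := exists_between hm₁
  set I := ∑ p : X × Y, P p.1 * Q p.1 p.2 * g₂ p.1 p.2 with hIdef
  set b := I / 2 with hb
  have hb0 : 0 < b := by positivity
  obtain ⟨s₁, hs₁, hs₁0⟩ := ((chernoff (hQ xs) (fun z => -g₁ z) (d := -a)
    (by simpa using ham)).and self_mem_nhdsWithin).exists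
  have hs₁0 : 0 < s₁ := hs₁0
  have hPQ : IsDist (fun p : X × Y => P p.1 * Q p.1 p.2) := by
    refine ⟨fun p => mul_nonneg (hP.1 _) ((hQ _).1 _), ?_⟩
    rw [Fintype.sum_prod_type]
    simp_rw [← Finset.mul_sum, (hQ _).2, mul_one]
    exact hP.2
  obtain ⟨s₂, hs₂, hs₂0⟩ := ((chernoff hPQ (fun p => -g₂ p.1 p.2) (d := -b) (by
    simp only [mul_neg, Finset.sum_neg_distrib]
    linarith)).and self_mem_nhdsWithin).exists
  have hs₂0 : 0 < s₂ := hs₂0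
  rw [Fintype.sum_prod_type] at hs₂
  have hρ₁ : ∑ z, Q xs z * Real.exp (-s₁ * g₁ z) ≤ Real.exp (s₁ * -a) := by
    simpa [mul_neg, neg_mul] using hs₁
  have hρ₂ : ∑ x, P x * ∑ z, Q x z * Real.exp (-s₂ * g₂ x z) ≤ Real.exp (s₂ * -b) := by
    simpa [mul_neg, neg_mul, Finset.mul_sum, mul_assoc] using hs₂
  have ha0 : 0 < a := hα.trans_lt haα
  obtain ⟨q, hq⟩ := exists_nat_gt (a / (a - α))
  have haα' : 0 < a - α := sub_pos.2 haα
  have hq0 : (0 : ℝ) < q := (div_pos ha0 haα').trans hq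
  have hqN : 0 < q := by exact_mod_cast hq0
  set c := a * (1 - 1 / q) - α with hcdef
  have hc0 : 0 < c := by
    have : a / q < a - α := by rwa [div_lt_comm₀ hq0 haα']
    have e : a * (1 - 1 / q) = a - a / q := by ring
    linarith
  set R' := b / (4 * q) with hR'
  have hR'0 : 0 < R' := by positivity
  refine ⟨R', hR'0, fun ε hε => ?_⟩
  have hlim := ((tendsto_lin_exp (c := s₁ * c) (by positivity) 0 1 (s₁ * Real.log 2)).add
    (tendsto_lin_exp (c := s₂ * b / (2 * q)) (by positivity) 0 1 (s₂ * b / 2))).add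
    (tendsto_lin_exp hR'0 6 3 (b / 2))
  simp only [add_zero] at hlim
  obtain ⟨N₀, hN₀⟩ := Filter.eventually_atTop.1 (hlim.eventually (gt_mem_nhds hε))
  refine ⟨N₀, fun N hN A hA hA2 => ?_⟩
  set n := N / q with hn
  have hn1 : (n : ℝ) ≤ N / q := Nat.cast_div_le
  have hn2 : (N : ℝ) / q - 1 ≤ n := by
    have : N < q * (N / q + 1) := Nat.lt_mul_div_succ N hqN
    have : (N : ℝ) < q * (n + 1) := by exact_mod_cast this
    rw [sub_le_iff_le_add, div_le_iff₀ hq0]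
    linarith
  have hnN : n ≤ N := Nat.div_le_self _ _
  set M := ⌈Real.exp (R' * N)⌉₊ + 1 with hMdef
  have hexp1 : 1 ≤ Real.exp (R' * N) := Real.one_le_exp (by positivity)
  have hM1 : Real.exp (R' * N) ≤ (M : ℝ) := by
    rw [hMdef]; push_cast
    linarith [Nat.le_ceil (Real.exp (R' * N))]
  have hM3 : (M : ℝ) ≤ 3 * Real.exp (R' * N) := by
    rw [hMdef]; push_cast
    linarith [Nat.ceil_lt_add_one (Real.exp_pos (R' * N)).le]
  have hM2 : 2 ≤ M := by
    have : 0 < ⌈Real.exp (R' * N)⌉₊ := Nat.ceil_pos.2 (Real.exp_pos _)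
    omega
  obtain ⟨cb, dec, hce⟩ := code_exists hQ star xs hP hg₁ hg₂ hs₁0 hs₂0 hρ₁ hρ₂ hnN hA
    (by omega : 1 ≤ M) (n * b / 2)
  refine ⟨M, hM2, hM1, cb, dec, hce.trans (le_trans ?_ (hN₀ N hN).le)⟩
  refine add_le_add (add_le_add ?_ ?_) ?_
  · rw [← Real.exp_nat_mul, ← Real.exp_add, zero_mul, zero_add, one_mul]
    apply Real.exp_le_exp.2
    have hlog : Real.log A ≤ Real.log 2 + α * N := by
      have hA0 : (0 : ℝ) < A := by exact_mod_cast hA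
      have := Real.log_le_log hA0 hA2
      rwa [Real.log_mul two_ne_zero (Real.exp_pos _).ne', Real.log_exp] at this
    rw [Nat.cast_sub hnN]
    have h1 : a * n ≤ a * (N / q) := mul_le_mul_of_nonneg_left hn1 ha0.le
    have h2 : c * N = a * N - a * (N / q) - α * N := by rw [hcdef]; ring
    have h3 : Real.log A - a * (N - n) ≤ Real.log 2 - c * N := by
      rw [h2]; linarith
    have := mul_le_mul_of_nonneg_left h3 hs₁0.le
    linarith
  · rw [← Real.exp_nat_mul, ← Real.exp_add, zero_mul, zero_add, one_mul]
    apply Real.exp_le_exp.2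
    have := mul_le_mul_of_nonneg_left hn2 (by positivity : 0 ≤ s₂ * b / 2)
    have e : s₂ * b / (2 * q) * N = s₂ * b / 2 * (N / q) := by ring
    rw [e]
    linarith
  · have h1 : Real.exp (-(n * b / 2)) ≤ Real.exp (b / 2 - 2 * R' * N) := by
      apply Real.exp_le_exp.2
      have := mul_le_mul_of_nonneg_left hn2 (by positivity : 0 ≤ b / 2)
      have e : 2 * R' * N = b / 2 * (N / q) := by rw [hR']; field_simp; norm_num
      rw [e]
      linarith
    calc (M : ℝ) * (Real.exp (-(n * b / 2)) * (2 * N + 1))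
        ≤ 3 * Real.exp (R' * N) * (Real.exp (b / 2 - 2 * R' * N) * (2 * N + 1)) := by gcongr
      _ = (6 * N + 3) * (Real.exp (R' * N) * Real.exp (b / 2 - 2 * R' * N)) := by ring
      _ = (6 * N + 3) * Real.exp (b / 2 - R' * N) := by
        rw [← Real.exp_add]; congr 2; ring

/-! ### Converse -/

/-- Under absolute continuity, the law of the output is its noise law times the likelihood ratio
along the transmission window. -/
lemma pathProb_inp {Q : X → Y → ℝ} {star : X} (hac : ∀ x b, Q star b = 0 → Q x b = 0)
    {N T : ℕ} (c : Fin N → X) (l : ℕ) (y : Fin T → Y) :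
    pathProb Q (inp star c l) y = pathProb Q (fun _ => star) y *
      winP l N (fun i b => Q (c i) b / Q star b) y := by
  rw [pathProb, pathProb, winP, ← Finset.prod_mul_distrib]
  refine Finset.prod_congr rfl fun t _ => ?_
  unfold inp
  split_ifs with h
  · by_cases h0 : Q star (y t) = 0
    · rw [h0, hac _ _ h0, zero_mul]
    · rw [mul_div_cancel₀ _ h0]
  · rw [mul_one]

/-- Non-asymptotic converse. Let `L_l` be the likelihood ratio of transmission at time `l` to pure
noise, truncated to outputs whose log-likelihood ratio is at most `θ`, and `S` the average of the
`L_l`. Under pure noise `S` has mean at least `1 - p` and second moment at most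
`1 + 2 N exp θ / A`, hence is close to `1`: the decoder does little better than if it observed pure
noise, where it errs with probability at least `1 - 1 / M`. -/
lemma converse_bound [Fintype X] [Fintype Y] {Q : X → Y → ℝ} (hQ : IsChannel Q) {star : X}
    (hac : ∀ x b, Q star b = 0 → Q x b = 0) {s ρ : ℝ} (hs : 0 < s)
    (hρ : ∀ x, ∑ b, Q x b * Real.exp (s * Real.log (Q x b / Q star b)) ≤ ρ) (θ : ℝ)
    {N M A : ℕ} (hM : 2 ≤ M) (hA : 1 ≤ A) (c : Fin M → Fin N → X)
    (dec : Decoder Y (A + N - 1) M) {p : ℝ} (hp : Real.exp (-s * θ) * ρ ^ N ≤ p) :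
    3 / 8 - 2 * (2 * N * Real.exp θ / A + 2 * p) - p ≤ errProb Q star c A dec := by
  classical
  have hA0 : (0 : ℝ) < A := by exact_mod_cast hA
  have hM0 : (2 : ℝ) ≤ M := by exact_mod_cast hM
  set v := 2 * N * Real.exp θ / A + 2 * p with hv
  let P₀ : (Fin (A + N - 1) → Y) → ℝ := pathProb Q (fun _ => star)
  have hP₀ : ∀ y, 0 ≤ P₀ y := fun y => pathProb_nonneg hQ _ _
  have hP₀1 : ∑ y, P₀ y = 1 := sum_pathProb hQ _
  have hfit : ∀ l ∈ Finset.Icc 1 A, 1 ≤ l ∧ l + N ≤ A + N - 1 + 1 := fun l hl => by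
    have := Finset.mem_Icc.1 hl
    omega
  -- the success probability of each message nearly is what it would be under pure noise
  have hmain : ∀ m, (1 / (A : ℝ)) * ∑ l ∈ Finset.Icc 1 A,
      ∑ y, (if dec.φ y = m then seqProb Q star (c m) l y else 0)
        ≤ ∑ y, (if dec.φ y = m then P₀ y else 0) + 1 / 8 + 2 * v + p := by
    intro m
    let L : ℕ → (Fin (A + N - 1) → Y) → ℝ := fun l y =>
      winP l N (fun i b => Q (c m i) b / Q star b) y
    let H : ℕ → (Fin (A + N - 1) → Y) → ℝ := fun l y =>
      winS l N (fun i b => Real.log (Q (c m i) b / Q star b)) y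
    let p₁ : ℕ → (Fin (A + N - 1) → Y) → ℝ := fun l y => pathProb Q (inp star (c m) l) y
    have hp₁ : ∀ l y, 0 ≤ p₁ l y := fun l y => pathProb_nonneg hQ _ _
    have hp₁L : ∀ l y, p₁ l y = P₀ y * L l y := fun l y => pathProb_inp hac _ _ _
    have hratio : ∀ (i : Fin N) b, 0 ≤ Q (c m i) b / Q star b := fun i b =>
      div_nonneg ((hQ _).1 _) ((hQ _).1 _)
    have hL0 : ∀ l y, 0 ≤ L l y := fun l y => winP_nonneg hratio y
    have hLH : ∀ l ∈ Finset.Icc 1 A, ∀ y, L l y ≤ Real.exp (H l y) := by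
      intro l hl y
      obtain ⟨h1, h2⟩ := hfit l hl
      change winP _ _ _ _ ≤ Real.exp (winS _ _ _ _)
      rw [winP_eq h1 h2, winS_eq h1 h2, Real.exp_sum]
      exact Finset.prod_le_prod (fun i _ => hratio _ _) fun i _ => Real.le_exp_log _
    let Lt : ℕ → (Fin (A + N - 1) → Y) → ℝ := fun l y => if H l y ≤ θ then L l y else 0
    have hLt0 : ∀ l y, 0 ≤ Lt l y := fun l y => by
      change 0 ≤ ite _ _ _
      split_ifs
      exacts [hL0 l y, le_rfl]
    have hLtL : ∀ l y, Lt l y ≤ L l y := fun l y => by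
      change ite _ _ _ ≤ _
      split_ifs
      exacts [le_rfl, hL0 l y]
    have hLtθ : ∀ l ∈ Finset.Icc 1 A, ∀ y, Lt l y ≤ Real.exp θ := fun l hl y => by
      change ite _ _ _ ≤ _
      split_ifs with h
      exacts [(hLH l hl y).trans (Real.exp_le_exp.2 h), (Real.exp_pos _).le]
    -- the truncation is rarely active
    have htail : ∀ l ∈ Finset.Icc 1 A, ∑ y, p₁ l y * (if H l y ≤ θ then 0 else 1) ≤ p := by
      intro l hl
      obtain ⟨h1, h2⟩ := hfit l hl
      calc ∑ y, p₁ l y * (if H l y ≤ θ then 0 else 1)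
          ≤ ∑ y, Real.exp (-s * θ) * (p₁ l y * Real.exp (s * H l y)) := by
            refine Finset.sum_le_sum fun y _ => ?_
            rw [mul_left_comm, ← Real.exp_add]
            refine mul_le_mul_of_nonneg_left ?_ (hp₁ _ _)
            split_ifs with h
            · positivity
            · exact Real.one_le_exp (by nlinarith [not_le.1 h])
        _ ≤ p := by
            rw [← Finset.mul_sum, expect_exp hQ h1 h2]
            simp_rw [inp_pos star h1 h2]
            refine le_trans (mul_le_mul_of_nonneg_left ?_ (Real.exp_pos _).le) hp
            refine (Finset.prod_le_prod (g := fun _ => ρ) ?_ fun i _ => hρ _).trans (by simp)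
            exact fun i _ => Finset.sum_nonneg fun b _ =>
              mul_nonneg ((hQ _).1 _) (Real.exp_pos _).le
    let S : (Fin (A + N - 1) → Y) → ℝ := fun y => (1 / (A : ℝ)) * ∑ l ∈ Finset.Icc 1 A, Lt l y
    have hS : ∀ y, P₀ y * S y = (1 / (A : ℝ)) * ∑ l ∈ Finset.Icc 1 A, P₀ y * Lt l y := fun y => by
      change P₀ y * (_ * _) = _
      rw [mul_left_comm, Finset.mul_sum]
    have hES : 1 - p ≤ ∑ y, P₀ y * S y := by
      simp_rw [hS]
      rw [← Finset.mul_sum, Finset.sum_comm]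
      have : ∑ _l ∈ Finset.Icc 1 A, (1 - p) ≤ ∑ l ∈ Finset.Icc 1 A, ∑ y, P₀ y * Lt l y := by
        refine Finset.sum_le_sum fun l hl => ?_
        have e : ∀ y, P₀ y * Lt l y = p₁ l y - p₁ l y * (if H l y ≤ θ then 0 else 1) := by
          intro y
          rw [hp₁L]
          change _ * ite _ _ _ = _
          split_ifs <;> ring
        simp_rw [e]
        rw [Finset.sum_sub_distrib, sum_pathProb hQ]
        linarith [htail l hl]
      rw [Finset.sum_const, Nat.card_Icc, nsmul_eq_mul, Nat.add_sub_cancel] at this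
      rw [one_div, inv_mul_eq_div, le_div_iff₀ hA0]
      linarith
    -- second moment: windows at distance at least `N` contribute at most `1`, others `exp θ`
    have hpair : ∀ l ∈ Finset.Icc 1 A,
        ∑ l' ∈ Finset.Icc 1 A, ∑ y, P₀ y * (Lt l y * Lt l' y)
          ≤ A * 1 + 2 * N * Real.exp θ := by
      intro l hl
      refine near_far (l := l) zero_le_one (Real.exp_pos _).le ?_ ?_
      · intro l' hl' hfar
        obtain ⟨h1, h2⟩ := hfit l' hl'
        calc ∑ y, P₀ y * (Lt l y * Lt l' y) ≤ ∑ y, p₁ l y * L l' y := by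
              refine Finset.sum_le_sum fun y _ => ?_
              rw [hp₁L, mul_assoc]
              exact mul_le_mul_of_nonneg_left
                (mul_le_mul (hLtL _ _) (hLtL _ _) (hLt0 _ _) (hL0 _ _)) (hP₀ y)
          _ ≤ 1 := by
              refine (expect_winP hQ h1 h2 (inp star (c m) l) _).trans_le ?_
              refine Finset.prod_le_one (fun i _ => Finset.sum_nonneg fun b _ =>
                mul_nonneg ((hQ _).1 _) (hratio _ _)) fun i _ => ?_
              rw [inp_far star h1 h2 (c m) le_rfl hfar, ← (hQ (c m i)).2]
              refine Finset.sum_le_sum fun b _ => ?_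
              by_cases h0 : Q star b = 0
              · rw [h0, zero_mul]; exact (hQ _).1 _
              · rw [mul_div_cancel₀ _ h0]
      · intro l' hl'
        calc ∑ y, P₀ y * (Lt l y * Lt l' y) ≤ ∑ y, Real.exp θ * p₁ l y := by
              refine Finset.sum_le_sum fun y _ => ?_
              rw [hp₁L, mul_left_comm (Real.exp θ)]
              refine mul_le_mul_of_nonneg_left ?_ (hP₀ y)
              rw [mul_comm (Real.exp θ)]
              exact mul_le_mul (hLtL _ _) (hLtθ l' hl' y) (hLt0 _ _) (hL0 _ _)
          _ = Real.exp θ := by rw [← Finset.mul_sum, sum_pathProb hQ, mul_one]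
    have hES2 : ∑ y, P₀ y * S y ^ 2 ≤ 1 + 2 * N * Real.exp θ / A := by
      have e : ∑ y, P₀ y * S y ^ 2 = (1 / (A : ℝ)) ^ 2 * ∑ l ∈ Finset.Icc 1 A,
          ∑ l' ∈ Finset.Icc 1 A, ∑ y, P₀ y * (Lt l y * Lt l' y) := by
        simp_rw [Finset.sum_comm (s := Finset.Icc 1 A) (t := Finset.univ)]
        rw [Finset.mul_sum]
        refine Finset.sum_congr rfl fun y _ => ?_
        change P₀ y * (_ * _) ^ 2 = _
        simp_rw [← Finset.mul_sum]
        rw [← Finset.sum_mul]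
        ring
      rw [e]
      calc _ ≤ (1 / (A : ℝ)) ^ 2 * ∑ _l ∈ Finset.Icc 1 A, (A * 1 + 2 * N * Real.exp θ) :=
            mul_le_mul_of_nonneg_left (Finset.sum_le_sum hpair) (by positivity)
        _ = 1 + 2 * N * Real.exp θ / A := by
            rw [Finset.sum_const, Nat.card_Icc, nsmul_eq_mul, Nat.add_sub_cancel]
            field_simp
    have hvar : ∑ y, P₀ y * (S y - 1) ^ 2 ≤ v := by
      have e : ∀ y, P₀ y * (S y - 1) ^ 2 = P₀ y * S y ^ 2 - 2 * (P₀ y * S y) + P₀ y :=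
        fun y => by ring
      simp_rw [e]
      rw [Finset.sum_add_distrib, Finset.sum_sub_distrib, ← Finset.mul_sum, hP₀1]
      linarith
    -- split each successful output according to whether the truncation is active
    have hsplit : (1 / (A : ℝ)) * ∑ l ∈ Finset.Icc 1 A,
        ∑ y, (if dec.φ y = m then seqProb Q star (c m) l y else 0)
        ≤ ∑ y, (if dec.φ y = m then P₀ y * S y else 0) + p := by
      have h1 : ∑ l ∈ Finset.Icc 1 A, ∑ y, (if dec.φ y = m then seqProb Q star (c m) l y else 0)
          ≤ ∑ l ∈ Finset.Icc 1 A, (∑ y, (if dec.φ y = m then P₀ y * Lt l y else 0) + p) := by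
        refine Finset.sum_le_sum fun l hl => ?_
        refine le_trans ?_ (add_le_add le_rfl (htail l hl))
        rw [← Finset.sum_add_distrib]
        refine Finset.sum_le_sum fun y _ => ?_
        change (if _ then p₁ l y else 0) ≤ _
        have h0 := hp₁ l y
        have e : P₀ y * Lt l y = p₁ l y * (if H l y ≤ θ then 1 else 0) := by
          rw [hp₁L]
          change _ * ite _ _ _ = _
          split_ifs <;> ring
        rw [e]
        split_ifs <;> simp [h0]
      refine (mul_le_mul_of_nonneg_left h1 (by positivity)).trans_eq ?_
      rw [Finset.sum_add_distrib, Finset.sum_const, Nat.card_Icc, nsmul_eq_mul,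
        Nat.add_sub_cancel, mul_add, one_div, inv_mul_cancel_left₀ hA0.ne', Finset.sum_comm,
        Finset.mul_sum]
      congr 1
      refine Finset.sum_congr rfl fun y _ => ?_
      split_ifs
      · rw [hS, one_div]
      · simp
    refine hsplit.trans (add_le_add ?_ le_rfl)
    -- `S ≤ 1 + 1 / 8 + 2 (S - 1) ^ 2` pointwise
    calc ∑ y, (if dec.φ y = m then P₀ y * S y else 0)
        ≤ ∑ y, ((if dec.φ y = m then P₀ y else 0)
            + (1 / 8 * P₀ y + 2 * (P₀ y * (S y - 1) ^ 2))) := by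
          refine Finset.sum_le_sum fun y _ => ?_
          have h0 := hP₀ y
          split_ifs
          · nlinarith [mul_nonneg h0 (sq_nonneg (4 * (S y - 1) - 1))]
          · positivity
      _ ≤ ∑ y, (if dec.φ y = m then P₀ y else 0) + 1 / 8 + 2 * v := by
          rw [Finset.sum_add_distrib, Finset.sum_add_distrib, ← Finset.mul_sum, ← Finset.mul_sum,
            hP₀1]
          linarith
  have herr : errProb Q star c A dec = 1 - (1 / (M : ℝ)) * ∑ m, (1 / (A : ℝ)) *
      ∑ l ∈ Finset.Icc 1 A, ∑ y, (if dec.φ y = m then seqProb Q star (c m) l y else 0) := by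
    have e : ∀ m l, ∑ y, (if dec.φ y = m then 0 else seqProb Q star (c m) l y)
        = 1 - ∑ y, (if dec.φ y = m then seqProb Q star (c m) l y else 0) := by
      intro m l
      rw [← sum_pathProb hQ (inp star (c m) l), ← Finset.sum_sub_distrib]
      refine Finset.sum_congr rfl fun y _ => ?_
      rw [seqProb_eq]
      split_ifs <;> ring
    rw [errProb]
    simp_rw [e, Finset.sum_sub_distrib]
    simp only [Finset.sum_const, Nat.card_Icc, Finset.card_univ, Fintype.card_fin,
      nsmul_eq_mul, Nat.add_sub_cancel, ← Finset.mul_sum]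
    field_simp
  have hnoise : ∑ m, ∑ y, (if dec.φ y = m then P₀ y else 0) = 1 := by
    rw [Finset.sum_comm]
    simpa using hP₀1
  have hsum := Finset.sum_le_sum fun m (_ : m ∈ Finset.univ) => hmain m
  simp only [Finset.sum_add_distrib, hnoise, Finset.sum_const, Finset.card_univ,
    Fintype.card_fin, nsmul_eq_mul] at hsum
  rw [herr]
  have hMinv : 1 / (M : ℝ) ≤ 1 / 2 := one_div_le_one_div_of_le two_pos hM0
  have := mul_le_mul_of_nonneg_left hsum (by positivity : 0 ≤ 1 / (M : ℝ))
  have e : 1 / (M : ℝ) * (1 + M * (1 / 8) + M * (2 * v) + M * p)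
      = 1 / M + (1 / 8 + 2 * v + p) := by
    field_simp
    ring
  rw [e] at this
  linarith

open Filter Topology in
/-- No exponent above `max_x D(Q(·|x)‖Q(·|⋆))` is achievable. -/
lemma not_achievable [Fintype X] [Fintype Y] {Q : X → Y → ℝ} (hQ : IsChannel Q) (star : X) {α : ℝ}
    (h : ⨆ x : X, klDiv (Q x) (Q star) < ENNReal.ofReal α) : ¬ AchievableAt Q star α 0 := by
  have hx : ∀ x, (∀ b, Q star b = 0 → Q x b = 0) ∧ klDivR (Q x) (Q star) < α := by
    intro x
    have hx := (le_iSup (fun x => klDiv (Q x) (Q star)) x).trans_lt h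
    rw [klDiv] at hx
    split_ifs at hx with hac
    · refine ⟨hac, ?_⟩
      by_contra hc
      exact absurd (ENNReal.ofReal_le_ofReal (not_lt.1 hc)) (not_le.2 hx)
    · exact absurd hx not_top_lt
  obtain ⟨d, hd, hdα⟩ : ∃ d, (∀ x, klDivR (Q x) (Q star) < d) ∧ d < α := by
    have h1 : ∀ᶠ d in 𝓝[<] α, ∀ x, klDivR (Q x) (Q star) < d :=
      eventually_all.2 fun x => (lt_mem_nhds (hx x).2).filter_mono nhdsWithin_le_nhds
    exact (h1.and self_mem_nhdsWithin).exists
  obtain ⟨s, hs, hs0⟩ := ((eventually_all.2 fun x => chernoff (hQ x)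
    (fun b => Real.log (Q x b / Q star b)) (d := d) (hd x)).and
      (self_mem_nhdsWithin (a := (0 : ℝ)) (s := Set.Ioi 0))).exists
  have hs0 : 0 < s := hs0
  intro hach
  -- the truncation exponent `d + γ` lies strictly between `d` and `d + 2 γ ≤ α - ε`
  set γ := (α - d) / 3 with hγ
  have hγ0 : 0 < γ := by rw [hγ]; linarith
  set ε := min γ (1 / 8) with hε
  have hε0 : 0 < ε := lt_min hγ0 (by norm_num)
  obtain ⟨N₀, hN₀⟩ := hach ε hε0
  have hlim := ((tendsto_lin_exp hγ0 4 0 0).add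
    (tendsto_lin_exp (c := s * γ) (by positivity) 0 5 0))
  simp only [add_zero] at hlim
  obtain ⟨N, hN1, hN2⟩ := ((hlim.eventually (gt_mem_nhds (show (0 : ℝ) < 1 / 4 by norm_num))).and
    (eventually_ge_atTop N₀)).exists
  obtain ⟨M, hM, c, dec, herr, -⟩ := hN₀ N hN2
  have hA : 1 ≤ ⌈Real.exp ((α - ε) * N)⌉₊ := Nat.ceil_pos.2 (Real.exp_pos _)
  have hA1 : Real.exp ((d + 2 * γ) * N) ≤ (⌈Real.exp ((α - ε) * N)⌉₊ : ℝ) := by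
    refine le_trans (Real.exp_le_exp.2 (mul_le_mul_of_nonneg_right ?_ (Nat.cast_nonneg N)))
      (Nat.le_ceil _)
    have : ε ≤ γ := min_le_left _ _
    linarith
  have hb := converse_bound hQ (fun x => (hx x).1) hs0 hs ((d + γ) * N) hM hA c dec
    (p := Real.exp (-(s * γ * N))) (by
      rw [← Real.exp_nat_mul, ← Real.exp_add]
      apply Real.exp_le_exp.2
      apply le_of_eq
      ring)
  have hfrac : 2 * N * Real.exp ((d + γ) * N) / (⌈Real.exp ((α - ε) * N)⌉₊ : ℝ)
      ≤ 2 * N * Real.exp (-(γ * N)) := by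
    rw [div_le_iff₀ (by exact_mod_cast hA)]
    refine le_trans (le_of_eq ?_) (mul_le_mul_of_nonneg_left hA1 (by positivity))
    rw [mul_assoc (2 * (N : ℝ)), ← Real.exp_add]
    congr 2
    ring
  have hε8 : ε ≤ 1 / 8 := min_le_right _ _
  simp only [zero_mul, zero_add, zero_sub] at hN1
  linarith

/-! ### The synchronization threshold -/

/-- **Theorem 1 (synchronization threshold).** For a discrete memoryless channel `Q`
with noise symbol `star` and positive synchronized capacity, the synchronization
threshold — the supremum of the asynchronism exponents achievable at zero rate —
equals `max_x D(Q(·|x)‖Q(·|⋆))` (a value in `[0,∞]`). Moreover, every exponent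
`α` strictly below this threshold is achieved by a coding strategy whose codebook
sizes satisfy `lim (ln M)/N > 0`, i.e. `M ≥ e^{R'N}` for some `R' > 0`. -/
theorem synchronization_threshold [Fintype X] [Fintype Y] [Nonempty X]
    (Q : X → Y → ℝ) (star : X) (hQ : IsChannel Q)
    (hfull : ∀ y : Y, ∃ x : X, 0 < Q x y) (hC : 0 < capacity Q) :
    (⨆ α ∈ {α : ℝ | AchievableAt Q star α 0}, ENNReal.ofReal α)
        = ⨆ x : X, klDiv (Q x) (Q star) ∧
    ∀ α : ℝ, 0 ≤ α → ENNReal.ofReal α < ⨆ x : X, klDiv (Q x) (Q star) →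
      ∃ R' : ℝ, 0 < R' ∧ ∀ ε : ℝ, 0 < ε → ∃ N₀ : ℕ, ∀ N ≥ N₀, ∃ M : ℕ, 2 ≤ M ∧
        Real.exp (R' * N) ≤ (M : ℝ) ∧
        ∃ (c : Fin M → Fin N → X)
          (dec : Decoder Y (⌈Real.exp (α * N)⌉₊ + N - 1) M),
          errProb Q star c ⌈Real.exp (α * N)⌉₊ dec ≤ ε := by
  have hone : ∀ β : ℝ, 1 ≤ ⌈Real.exp β⌉₊ := fun β => Nat.ceil_pos.2 (Real.exp_pos _)
  refine ⟨le_antisymm ?_ ?_, ?_⟩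
  · refine iSup₂_le fun α hα => ?_
    by_contra hc
    exact not_achievable hQ star (not_le.1 hc) hα
  · refine le_of_forall_lt fun t ht => ?_
    obtain ⟨u, htu, hu⟩ := exists_between ht
    have hu0 : ENNReal.ofReal u.toReal = u := ENNReal.ofReal_toReal hu.ne_top
    refine htu.trans_le ?_
    rw [← hu0] at hu ⊢
    refine le_iSup₂_of_le u.toReal ?_ le_rfl
    obtain ⟨R', -, hR'⟩ := achieve hQ star hC ENNReal.toReal_nonneg hu
    intro ε hε
    obtain ⟨N₀, hN₀⟩ := hR' ε hε
    refine ⟨N₀, fun N hN => ?_⟩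
    obtain ⟨M, hM, -, c, dec, he⟩ := hN₀ N hN ⌈Real.exp ((u.toReal - ε) * N)⌉₊ (hone _) (by
      have h1 := (Nat.ceil_lt_add_one (Real.exp_pos ((u.toReal - ε) * N)).le).le
      have h2 : Real.exp ((u.toReal - ε) * N) ≤ Real.exp (u.toReal * N) :=
        Real.exp_le_exp.2 (mul_le_mul_of_nonneg_right (by linarith) (Nat.cast_nonneg N))
      have h3 : 1 ≤ Real.exp (u.toReal * N) := Real.one_le_exp (by positivity)
      linarith)
    refine ⟨M, hM, c, dec, he, ?_⟩
    -- at rate `0` the rate constraint only says that `log M / E(τ - ν)⁺` is nonnegative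
    have hdel : 0 ≤ expDelay Q star c _ dec := by
      unfold expDelay
      refine mul_nonneg (by positivity) (Finset.sum_nonneg fun m _ => Finset.sum_nonneg fun l _ =>
        Finset.sum_nonneg fun y _ => mul_nonneg (pathProb_nonneg hQ _ y) (le_max_right _ _))
    have := div_nonneg (Real.log_natCast_nonneg M) hdel
    linarith
  · intro α hα h
    obtain ⟨R', hR'0, hR'⟩ := achieve hQ star hC hα h
    refine ⟨R', hR'0, fun ε hε => ?_⟩
    obtain ⟨N₀, hN₀⟩ := hR' ε hε
    refine ⟨N₀, fun N hN => hN₀ N hN _ (hone _) ?_⟩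
    have h1 := (Nat.ceil_lt_add_one (Real.exp_pos (α * N)).le).le
    have h3 : 1 ≤ Real.exp (α * N) := Real.one_le_exp (by positivity)
    linarith

end Async
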